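/- Let E be a homogeneous effect algebra and let B ⊆ E. The following are equivalent: (a) B is a maximal internally compatible subset of E with 1 ∈ B; (b) B is a block of E, i.e. a maximal sub-effect algebra of E satisfying the Riesz decomposition property. -/

import Mathlib

/-- An effect algebra: a partial commutative, associative operation `oplus`
(with definedness encoded via `Option`), constants `zero` and `one`,
unique orthosupplements, and `a ⊕ 1` defined only for `a = 0`. -/
structure EffectAlgebra (E : Type*) where
  oplus : E → E → Option E
  zero : E
  one : E
  comm : ∀ a b, oplus a b = oplus b a
  assoc : ∀ a b c ab abc, oplus a b = some ab → oplus ab c = some abc →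
    ∃ bc, oplus b c = some bc ∧ oplus a bc = some abc
  compl_exists : ∀ a, ∃ b, oplus a b = some one
  compl_unique : ∀ a b c, oplus a b = some one → oplus a c = some one → b = c
  add_one : ∀ a b, oplus a one = some b → a = zero

namespace EffectAlgebra

variable {E : Type*} (A : EffectAlgebra E)

/-- `a ⊥ b` : the sum `a ⊕ b` is defined. -/
def Perp (a b : E) : Prop := (A.oplus a b).isSome

/-- `a ≤ b` iff `b = a ⊕ c` for some `c`. -/
def le (a b : E) : Prop := ∃ c, A.oplus a c = some b

/-- The orthosupplement `a'`: the unique `b` with `a ⊕ b = 1`. -/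
noncomputable def compl (a : E) : E :=
  @Classical.epsilon E ⟨A.zero⟩ fun b => A.oplus a b = some A.one

/-- `a ⊖ b` : the unique `c` with `b ⊕ c = a` (defined when `b ≤ a`). -/
noncomputable def ominus (a b : E) : E :=
  @Classical.epsilon E ⟨A.zero⟩ fun c => A.oplus b c = some a

/-- Homogeneity. -/
def Homogeneous : Prop :=
  ∀ u v₁ v₂ s, A.oplus v₁ v₂ = some s → A.le u s → A.le u (A.compl s) →
    ∃ u₁ u₂, A.le u₁ v₁ ∧ A.le u₂ v₂ ∧ A.oplus u₁ u₂ = some u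

/-- Riesz decomposition property. -/
def RDP : Prop :=
  ∀ u v₁ v₂ s, A.oplus v₁ v₂ = some s → A.le u s →
    ∃ u₁ u₂, A.le u₁ v₁ ∧ A.le u₂ v₂ ∧ A.oplus u₁ u₂ = some u

/-- The sum `c₁ ⊕ … ⊕ cₙ` of a finite family (a list); `some s` iff the family
is orthogonal with sum `s`. -/
def sumList : List E → Option E
  | [] => some A.zero
  | x :: xs => (sumList xs).bind fun s => A.oplus x s

/-- The subfamily of `C` indexed by a set of indices `S ⊆ {1,…,n}`. -/
def pickList (C : List E) (S : Finset (Fin C.length)) : List E :=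
  (S.sort (· ≤ ·)).map C.get

/-- `C` is an orthogonal cover of `M`. -/
def IsCoverOf (C : List E) (M : Set E) : Prop :=
  (A.sumList C).isSome ∧
    ∀ a ∈ M, ∃ S : Finset (Fin C.length), A.sumList (pickList C S) = some a

/-- `M` is compatible with covers in `X`: every finite subset of `M` has an
orthogonal cover with range contained in `X`. -/
def CompatWithCoversIn (M X : Set E) : Prop :=
  ∀ F : Finset E, ↑F ⊆ M →
    ∃ C : List E, (∀ c ∈ C, c ∈ X) ∧ A.IsCoverOf C ↑F

/-- `M` is compatible (with covers in `E`). -/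
def Compatible (M : Set E) : Prop := A.CompatWithCoversIn M Set.univ

/-- `M` is internally compatible. -/
def InternallyCompatible (M : Set E) : Prop := A.CompatWithCoversIn M M

/-- `D` is a refinement of `C`: a partition `{P i}` of the index set of `D`
with `C i = ⊕_{j ∈ P i} D j`. -/
def IsRefinement (D C : List E) : Prop :=
  ∃ P : Fin C.length → Finset (Fin D.length),
    (∀ i j, i ≠ j → Disjoint (P i) (P j)) ∧
    (∀ k, ∃ i, k ∈ P i) ∧
    (∀ i, A.sumList (pickList D (P i)) = some (C.get i))

/-- One step of the closure construction `M ↦ M₁`. -/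
def closureStep (M : Set E) : Set E :=
  {x | ∃ y ∈ M, A.le x y ∧ A.le x (A.compl y)} ∪
  {z | ∃ y ∈ M, ∃ x, A.le x y ∧ A.le x (A.compl y) ∧ A.oplus x z = some y}

/-- The sets `Mₙ`. -/
def closureSeq (M : Set E) (n : ℕ) : Set E := (A.closureStep)^[n] M

/-- The closure `M̄ = ⋃ₙ Mₙ`. -/
def closure (M : Set E) : Set E := ⋃ n, A.closureSeq M n

/-- `B` is a sub-effect algebra of `E`. -/
def IsSubEA (B : Set E) : Prop :=
  A.one ∈ B ∧ ∀ a ∈ B, ∀ b ∈ B, A.le b a → A.ominus a b ∈ B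

/-- The Riesz decomposition property for (the effect algebra on) a subset `B`. -/
def RDPOn (B : Set E) : Prop :=
  ∀ u v₁ v₂ s, u ∈ B → v₁ ∈ B → v₂ ∈ B → A.oplus v₁ v₂ = some s → A.le u s →
    ∃ u₁ u₂, u₁ ∈ B ∧ u₂ ∈ B ∧ A.le u₁ v₁ ∧ A.le u₂ v₂ ∧ A.oplus u₁ u₂ = some u

/-- Homogeneity for (the effect algebra on) a subset `B`. -/
def HomogeneousOn (B : Set E) : Prop :=
  ∀ u v₁ v₂ s, u ∈ B → v₁ ∈ B → v₂ ∈ B → A.oplus v₁ v₂ = some s →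
    A.le u s → A.le u (A.compl s) →
    ∃ u₁ u₂, u₁ ∈ B ∧ u₂ ∈ B ∧ A.le u₁ v₁ ∧ A.le u₂ v₂ ∧ A.oplus u₁ u₂ = some u

/-- A block: a maximal sub-effect algebra satisfying the Riesz decomposition
property. -/
def IsBlock (B : Set E) : Prop :=
  A.IsSubEA B ∧ A.RDPOn B ∧
    ∀ B', A.IsSubEA B' → A.RDPOn B' → B ⊆ B' → B' = B

/-- A block of the sub-effect algebra on `F`: a maximal sub-effect algebra of
`F` satisfying the Riesz decomposition property. -/
def IsBlockIn (F B : Set E) : Prop :=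
  B ⊆ F ∧ A.IsSubEA B ∧ A.RDPOn B ∧
    ∀ B', B' ⊆ F → A.IsSubEA B' → A.RDPOn B' → B ⊆ B' → B' = B

/-- `a` is sharp: the infimum `a ∧ a'` exists and equals `0`, i.e. every common
lower bound of `a` and `a'` is `0`. -/
def Sharp (a : E) : Prop :=
  ∀ b, A.le b a → A.le b (A.compl a) → b = A.zero

/-- `a` is sharp in the sub-effect algebra on `F`. -/
def SharpIn (F : Set E) (a : E) : Prop :=
  a ∈ F ∧ ∀ b ∈ F, A.le b a → A.le b (A.compl a) → b = A.zero

/-- `a` is principal. -/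
def Principal (a : E) : Prop :=
  ∀ x y s, A.le x a → A.le y a → A.oplus x y = some s → A.le s a

/-- `a` is principal in the sub-effect algebra on `B`. -/
def PrincipalIn (B : Set E) (a : E) : Prop :=
  a ∈ B ∧ ∀ x ∈ B, ∀ y ∈ B, ∀ s, A.le x a → A.le y a →
    A.oplus x y = some s → A.le s a

/-- `a` is central: principal, and every `b` has a unique decomposition
`b = b₁ ⊕ b₂` with `b₁ ≤ a`, `b₂ ≤ a'`. -/
def Central (a : E) : Prop :=
  A.Principal a ∧ ∀ b, ∃! p : E × E,
    A.le p.1 a ∧ A.le p.2 (A.compl a) ∧ A.oplus p.1 p.2 = some b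

/-- `a` is central in the sub-effect algebra on `B`. -/
def CentralIn (B : Set E) (a : E) : Prop :=
  A.PrincipalIn B a ∧ ∀ b ∈ B, ∃! p : E × E,
    p.1 ∈ B ∧ p.2 ∈ B ∧ A.le p.1 a ∧ A.le p.2 (A.compl a) ∧
      A.oplus p.1 p.2 = some b

/-- The center `C(E)`. -/
def center : Set E := {a | A.Central a}

/-- The compatibility center `K(E)`: the intersection of all blocks. -/
def compatCenter : Set E := {x | ∀ B, A.IsBlock B → x ∈ B}

end EffectAlgebra

/-!
A sub-effect algebra with the Riesz decomposition property is internally compatible: starting from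
the cover `(1)`, each further element is made a subsum by splitting the members of the cover. As
every internally compatible set extends to a maximal one by Zorn's lemma, it remains to show that
a maximal internally compatible set `B ∋ 1` is a sub-effect algebra with the Riesz decomposition
property.

By homogeneity, an orthogonal family in `X` with sum `s` can be refined so that a given
`u ≤ s ≤ u'` becomes a subsum, and the refinement stays in `X` when `closureStep X ⊆ X`. Hence
`closure B` is again internally compatible, so that `closureStep B ⊆ B` by maximality. If now `u`
and `x` are subsums of an orthogonal family in `B` and `u ≤ x`, then after cancelling the common
members of the two subfamilies homogeneity applies to the rest, and `u` becomes a subsum of a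
refinement in `B` of the subfamily with sum `x`. So `x ⊖ u` can be adjoined to `B` and belongs to
it by maximality, and refining a cover along `u ≤ v₁ ⊕ v₂` gives the Riesz decomposition.
-/

namespace EffectAlgebra

variable {E : Type*} {A : EffectAlgebra E} {M N X B : Set E} {C D : Multiset E}

/-! ### The totalized sum -/

/-- `E` with an absorbing element `none` adjoined, standing for an undefined sum. It turns the
partial operation `⊕` into a commutative monoid, so that `a ⊕ b` is defined and equal to `c` iff
`(a : A.Totalization) + b = c`. -/
def Totalization (_A : EffectAlgebra E) : Type _ := Option E

/-- The inclusion of `E` into its totalization. -/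
@[coe] def toTotalization (a : E) : A.Totalization := some a

instance : CoeTail E A.Totalization := ⟨toTotalization⟩

instance : Add A.Totalization := ⟨fun x y => Option.bind x fun a => Option.bind y (A.oplus a)⟩

instance : Zero A.Totalization := ⟨(A.zero : A.Totalization)⟩

theorem coe_zero : (A.zero : A.Totalization) = 0 := rfl

theorem coe_injective : Function.Injective (toTotalization : E → A.Totalization) :=
  Option.some_injective E

theorem coe_add_coe_eq_coe {a b c : E} :
    (a : A.Totalization) + b = c ↔ A.oplus a b = some c := Iff.rfl

theorem exists_coe_of_add_eq_coe {x y : A.Totalization} {c : E} (h : x + y = c) :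
    ∃ a b : E, x = a ∧ y = b := by
  rcases x with _ | a
  · cases h
  · rcases y with _ | b
    · cases h
    · exact ⟨a, b, rfl, rfl⟩

theorem one_oplus_zero : A.oplus A.one A.zero = some A.one := by
  obtain ⟨b, hb⟩ := A.compl_exists A.one
  rwa [A.add_one b A.one (by rw [A.comm, hb])] at hb

theorem oplus_zero (a : E) : A.oplus a A.zero = some a := by
  obtain ⟨b, hab⟩ := A.compl_exists a
  have hba : A.oplus b a = some A.one := by rw [A.comm, hab]
  obtain ⟨c, hc, hbc⟩ := A.assoc b a A.zero _ _ hba one_oplus_zero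
  rw [hc, A.compl_unique b c a hbc hba]

protected theorem Totalization.add_comm (x y : A.Totalization) : x + y = y + x := by
  rcases x with _ | a <;> rcases y with _ | b
  · rfl
  · rfl
  · rfl
  · exact A.comm a b

protected theorem Totalization.add_zero (x : A.Totalization) : x + 0 = x := by
  rcases x with _ | a
  · rfl
  · exact oplus_zero a

theorem Totalization.add_add_eq_coe {x y z : A.Totalization} {t : E} (h : x + y + z = t) :
    x + (y + z) = t := by
  obtain ⟨xy, c, hxy, rfl⟩ := exists_coe_of_add_eq_coe h
  obtain ⟨a, b, rfl, rfl⟩ := exists_coe_of_add_eq_coe hxy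
  rw [hxy] at h
  obtain ⟨bc, hbc, habc⟩ := A.assoc a b c xy t hxy h
  rw [coe_add_coe_eq_coe.2 hbc]
  exact habc

protected theorem Totalization.add_assoc (x y z : A.Totalization) :
    x + y + z = x + (y + z) := by
  refine Option.ext fun t => ⟨fun h => add_add_eq_coe h, fun h => ?_⟩
  have h' : z + y + x = (t : A.Totalization) := by
    rw [Totalization.add_comm _ x, Totalization.add_comm z y]
    exact h
  rw [Totalization.add_comm _ z, Totalization.add_comm x y]
  exact add_add_eq_coe h'

instance : AddCommMonoid A.Totalization where
  add_assoc := Totalization.add_assoc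
  add_comm := Totalization.add_comm
  zero_add x := by rw [Totalization.add_comm, Totalization.add_zero]
  add_zero := Totalization.add_zero
  nsmul := nsmulRec

theorem coe_add_compl (a : E) : (a : A.Totalization) + A.compl a = A.one :=
  @Classical.epsilon_spec E (fun b => A.oplus a b = some A.one) (A.compl_exists a)

theorem coe_add_ominus {a b : E} (h : A.le b a) : (b : A.Totalization) + A.ominus a b = a :=
  @Classical.epsilon_spec E (fun c => A.oplus b c = some a) h

theorem add_left_cancel_of_eq_coe {x y z : A.Totalization} {d : E} (hy : x + y = d)
    (hz : x + z = d) : y = z := by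
  obtain ⟨a, b, rfl, rfl⟩ := exists_coe_of_add_eq_coe hy
  obtain ⟨-, c, -, rfl⟩ := exists_coe_of_add_eq_coe hz
  have add_compl_eq_one {e : E} (he : (a : A.Totalization) + e = d) :
      (a : A.Totalization) + A.compl d + e = A.one := by
    rw [add_right_comm, he, coe_add_compl]
  obtain ⟨w, -, hw, -⟩ := exists_coe_of_add_eq_coe (add_compl_eq_one hy)
  congr 1
  apply A.compl_unique w
  · rw [← coe_add_coe_eq_coe, ← hw, add_compl_eq_one hy]
  · rw [← coe_add_coe_eq_coe, ← hw, add_compl_eq_one hz]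

theorem le_of_add_eq_coe {a b : E} {x : A.Totalization} (h : a + x = b) : A.le a b := by
  obtain ⟨-, c, -, rfl⟩ := exists_coe_of_add_eq_coe h
  exact ⟨c, h⟩

theorem eq_zero_of_le_zero {a : E} (h : A.le a A.zero) : a = A.zero := by
  obtain ⟨b, hab⟩ := h
  have hb_add : (b : A.Totalization) + (a + A.one) = A.one := by
    rw [← add_assoc, add_comm (b : A.Totalization), coe_add_coe_eq_coe.2 hab, coe_zero, zero_add]
  obtain ⟨-, c, -, hc⟩ := exists_coe_of_add_eq_coe hb_add
  exact A.add_one a c hc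

theorem le_one (a : E) : A.le a A.one := A.compl_exists a

theorem zero_le (a : E) : A.le A.zero a := ⟨a, by rw [A.comm, oplus_zero]⟩

theorem le_compl_iff {a b : E} : A.le a (A.compl b) ↔ ∃ t : E, (a : A.Totalization) + b = t := by
  constructor
  · rintro ⟨c, hc⟩
    have h_one : (a : A.Totalization) + b + c = A.one := by
      rw [add_right_comm, coe_add_coe_eq_coe.2 hc, add_comm, coe_add_compl]
    obtain ⟨t, -, ht, -⟩ := exists_coe_of_add_eq_coe h_one
    exact ⟨t, ht⟩
  · rintro ⟨t, ht⟩
    refine le_of_add_eq_coe (x := A.compl t) (add_left_cancel_of_eq_coe ?_ (coe_add_compl b))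
    rw [← add_assoc, add_comm (b : A.Totalization), ht, coe_add_compl]

/-! ### Sub-effect algebras -/

theorem IsSubEA.mem_of_add_eq (hB : A.IsSubEA B) {a b c : E} (ha : a ∈ B) (hc : c ∈ B)
    (h : (a : A.Totalization) + b = c) : b ∈ B := by
  have hac : A.le a c := ⟨b, h⟩
  rw [coe_injective (add_left_cancel_of_eq_coe h (coe_add_ominus hac))]
  exact hB.2 c hc a ha hac

theorem IsSubEA.compl_mem (hB : A.IsSubEA B) {a : E} (ha : a ∈ B) : A.compl a ∈ B :=
  hB.mem_of_add_eq ha hB.1 (coe_add_compl a)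

theorem IsSubEA.zero_mem (hB : A.IsSubEA B) : A.zero ∈ B :=
  hB.mem_of_add_eq hB.1 hB.1 one_oplus_zero

theorem IsSubEA.add_mem (hB : A.IsSubEA B) {a b c : E} (ha : a ∈ B) (hb : b ∈ B)
    (h : (a : A.Totalization) + b = c) : c ∈ B := by
  have hb_add : (b : A.Totalization) + A.compl c = A.compl a := by
    refine add_left_cancel_of_eq_coe (x := a) (d := A.one) ?_ (coe_add_compl a)
    rw [← add_assoc, h, coe_add_compl]
  have hc' : A.compl c ∈ B := hB.mem_of_add_eq hb (hB.compl_mem ha) hb_add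
  exact hB.mem_of_add_eq hc' hB.1 (by rw [add_comm, coe_add_compl])

/-! ### Sums of multisets, subsums and refinements -/

variable (A) in
/-- The sum of a finite family, viewed as a multiset. -/
def sumMultiset (C : Multiset E) : A.Totalization := (C.map toTotalization).sum

variable (A) in
/-- The elements of `E` that are sums of subfamilies of `C`. -/
def subsums (C : Multiset E) : Set E := {a | ∃ T ≤ C, A.sumMultiset T = a}

variable (A) in
/-- `C` is an orthogonal family with range contained in `X`. -/
structure IsOrthogonalIn (X : Set E) (C : Multiset E) : Prop where
  mem : ∀ c ∈ C, c ∈ X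
  exists_sum : ∃ s : E, A.sumMultiset C = s

variable (A) in
/-- `D` arises from `C` by replacing every member of `C` by a finite family of elements of `X`
that sums to it. The replacing families form the multiset `W`. -/
def RefinesIn (X : Set E) (D C : Multiset E) : Prop :=
  ∃ W : Multiset (Multiset E),
    Multiset.Rel (fun P (c : E) => (∀ p ∈ P, p ∈ X) ∧ A.sumMultiset P = c) W C ∧ W.join = D

@[simp] theorem sumMultiset_zero : A.sumMultiset 0 = 0 := by simp [sumMultiset]

@[simp] theorem sumMultiset_cons (a : E) (C : Multiset E) :
    A.sumMultiset (a ::ₘ C) = a + A.sumMultiset C := by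
  simp [sumMultiset]

@[simp] theorem sumMultiset_add (C D : Multiset E) :
    A.sumMultiset (C + D) = A.sumMultiset C + A.sumMultiset D := by
  simp [sumMultiset]

theorem IsSubEA.sumMultiset_mem (hB : A.IsSubEA B) (hC : ∀ c ∈ C, c ∈ B) {s : E}
    (hs : A.sumMultiset C = s) : s ∈ B := by
  induction C using Multiset.induction_on generalizing s with
  | empty =>
    rw [sumMultiset_zero, ← coe_zero] at hs
    exact coe_injective hs ▸ hB.zero_mem
  | cons a C ih =>
    rw [sumMultiset_cons] at hs
    obtain ⟨-, t, -, ht⟩ := exists_coe_of_add_eq_coe hs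
    rw [Multiset.forall_mem_cons] at hC
    exact hB.add_mem hC.1 (ih hC.2 ht) (ht ▸ hs)

theorem IsSubEA.subsums_subset (hB : A.IsSubEA B) (hC : ∀ c ∈ C, c ∈ B) : A.subsums C ⊆ B :=
  fun _ ⟨_, hTC, hT⟩ => hB.sumMultiset_mem (fun c hc => hC c (Multiset.mem_of_le hTC hc)) hT

theorem subsums_mono (h : C ≤ D) : A.subsums C ⊆ A.subsums D :=
  fun _ ⟨T, hTC, hT⟩ => ⟨T, hTC.trans h, hT⟩

theorem le_of_mem_subsums {a s : E} (ha : a ∈ A.subsums C) (hs : A.sumMultiset C = s) :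
    A.le a s := by
  obtain ⟨T, hTC, hT⟩ := ha
  obtain ⟨K, rfl⟩ := Multiset.le_iff_exists_add.1 hTC
  rw [sumMultiset_add, hT] at hs
  exact le_of_add_eq_coe hs

theorem mem_subsums_of_add_eq {a b s : E} (hs : A.sumMultiset C = s) (ha : a ∈ A.subsums C)
    (h : (a : A.Totalization) + b = s) : b ∈ A.subsums C := by
  obtain ⟨T, hTC, hT⟩ := ha
  obtain ⟨K, rfl⟩ := Multiset.le_iff_exists_add.1 hTC
  rw [sumMultiset_add, hT] at hs
  exact ⟨K, Multiset.le_add_left K T, add_left_cancel_of_eq_coe hs h⟩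

theorem exists_add_eq_of_mem_subsums_add {a : E} (h : a ∈ A.subsums (C + D)) :
    ∃ b ∈ A.subsums C, ∃ c ∈ A.subsums D, (b : A.Totalization) + c = a := by
  classical
  obtain ⟨T, hT, hTa⟩ := h
  have h_sum : A.sumMultiset (T ∩ C) + A.sumMultiset (T - C) = a := by
    rw [← sumMultiset_add, add_comm, Multiset.sub_add_inter, hTa]
  obtain ⟨b, c, hb, hc⟩ := exists_coe_of_add_eq_coe h_sum
  exact ⟨b, ⟨_, Multiset.inter_le_right, hb⟩, c, ⟨_, tsub_le_iff_left.2 hT, hc⟩,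
    by rw [← hb, ← hc, h_sum]⟩

theorem IsOrthogonalIn.of_le (hD : A.IsOrthogonalIn X D) (h : C ≤ D) :
    A.IsOrthogonalIn X C := by
  refine ⟨fun c hc => hD.mem c (Multiset.mem_of_le h hc), ?_⟩
  obtain ⟨s, hs⟩ := hD.exists_sum
  obtain ⟨K, rfl⟩ := Multiset.le_iff_exists_add.1 h
  rw [sumMultiset_add] at hs
  obtain ⟨t, -, ht, -⟩ := exists_coe_of_add_eq_coe hs
  exact ⟨t, ht⟩

theorem IsOrthogonalIn.mono (hXN : X ⊆ N) (hC : A.IsOrthogonalIn X C) : A.IsOrthogonalIn N C :=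
  ⟨fun c hc => hXN (hC.mem c hc), hC.exists_sum⟩

namespace RefinesIn

variable {C₁ C₂ D₁ D₂ : Multiset E}

theorem zero : A.RefinesIn X 0 0 := ⟨0, .zero, Multiset.join_zero⟩

theorem add (h₁ : A.RefinesIn X D₁ C₁) (h₂ : A.RefinesIn X D₂ C₂) :
    A.RefinesIn X (D₁ + D₂) (C₁ + C₂) := by
  obtain ⟨W₁, hW₁, rfl⟩ := h₁
  obtain ⟨W₂, hW₂, rfl⟩ := h₂
  exact ⟨W₁ + W₂, hW₁.add hW₂, Multiset.join_add W₁ W₂⟩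

theorem cons {P : Multiset E} {c : E} (hP : ∀ p ∈ P, p ∈ X) (hc : A.sumMultiset P = c)
    (h : A.RefinesIn X D C) : A.RefinesIn X (P + D) (c ::ₘ C) := by
  obtain ⟨W, hW, rfl⟩ := h
  exact ⟨P ::ₘ W, .cons ⟨hP, hc⟩ hW, Multiset.join_cons P W⟩

theorem refl (hC : ∀ c ∈ C, c ∈ X) : A.RefinesIn X C C := by
  induction C using Multiset.induction_on with
  | empty => exact zero
  | cons c C ih =>
    rw [Multiset.forall_mem_cons] at hC
    exact cons (P := {c}) (by simpa using hC.1) (by simp [sumMultiset]) (ih hC.2)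

theorem mem (h : A.RefinesIn X D C) : ∀ d ∈ D, d ∈ X := by
  obtain ⟨W, hW, rfl⟩ := h
  intro d hd
  obtain ⟨P, hPW, hdP⟩ := Multiset.mem_join.1 hd
  obtain ⟨-, -, hP, -⟩ := Multiset.exists_mem_of_rel_of_mem hW hPW
  exact hP d hdP

theorem sumMultiset_eq (h : A.RefinesIn X D C) : A.sumMultiset D = A.sumMultiset C := by
  obtain ⟨W, hW, rfl⟩ := h
  induction hW with
  | zero => simp
  | cons hPc _ ih => simp [ih, hPc.2]

theorem exists_add (h : A.RefinesIn X D (C₁ + C₂)) :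
    ∃ D₁ D₂, A.RefinesIn X D₁ C₁ ∧ A.RefinesIn X D₂ C₂ ∧ D = D₁ + D₂ := by
  obtain ⟨W, hW, rfl⟩ := h
  obtain ⟨W₁, W₂, hW₁, hW₂, rfl⟩ := Multiset.rel_add_right.1 hW
  exact ⟨W₁.join, W₂.join, ⟨W₁, hW₁, rfl⟩, ⟨W₂, hW₂, rfl⟩, Multiset.join_add W₁ W₂⟩

theorem subsums_subset (h : A.RefinesIn X D C) : A.subsums C ⊆ A.subsums D := by
  rintro a ⟨T, hTC, hT⟩
  obtain ⟨K, rfl⟩ := Multiset.le_iff_exists_add.1 hTC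
  obtain ⟨T', K', hT', -, rfl⟩ := h.exists_add
  exact ⟨T', Multiset.le_add_right T' K', hT'.sumMultiset_eq.trans hT⟩

theorem isOrthogonalIn (h : A.RefinesIn X D C) (hC : A.IsOrthogonalIn X C) :
    A.IsOrthogonalIn X D :=
  ⟨h.mem, h.sumMultiset_eq ▸ hC.exists_sum⟩

theorem exists_of_le (h : A.RefinesIn X D₁ C₁) (hC : A.IsOrthogonalIn X C) (hC₁ : C₁ ≤ C) :
    ∃ D, A.RefinesIn X D C ∧ D₁ ≤ D := by
  obtain ⟨K, rfl⟩ := Multiset.le_iff_exists_add.1 hC₁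
  have hK : ∀ k ∈ K, k ∈ X := fun k hk => hC.mem k (Multiset.mem_add.2 (.inr hk))
  exact ⟨D₁ + K, h.add (refl hK), Multiset.le_add_right D₁ K⟩

theorem exists_mem_subsums_of_le (h : A.RefinesIn X D₁ C₁) (hC : A.IsOrthogonalIn X C)
    (hC₁ : C₁ ≤ C) {x y z : E} (hy : A.sumMultiset C₁ = y) (hx : x ∈ A.subsums D₁)
    (hxz : (x : A.Totalization) + z = y) :
    ∃ D, A.RefinesIn X D C ∧ x ∈ A.subsums D ∧ z ∈ A.subsums D := by
  obtain ⟨D, hDC, hD₁D⟩ := h.exists_of_le hC hC₁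
  have hz : z ∈ A.subsums D₁ := mem_subsums_of_add_eq (h.sumMultiset_eq.trans hy) hx hxz
  exact ⟨D, hDC, subsums_mono hD₁D hx, subsums_mono hD₁D hz⟩

end RefinesIn

/-! ### Compatibility -/

theorem sumList_eq_sumMultiset (l : List E) :
    A.sumList l = A.sumMultiset (l : Multiset E) := by
  induction l with
  | nil => rfl
  | cons a l ih =>
    rw [← Multiset.cons_coe, sumMultiset_cons, ← ih]
    rfl

theorem coe_pickList (C : List E) (S : Finset (Fin C.length)) :
    (pickList C S : Multiset E) = S.val.map C.get := by
  rw [pickList, ← Multiset.map_coe, Finset.sort_eq]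

theorem le_coe_iff_exists_pickList {C : List E} {T : Multiset E} :
    T ≤ C ↔ ∃ S : Finset (Fin C.length), (pickList C S : Multiset E) = T := by
  constructor
  · intro hT
    induction T using Quotient.inductionOn with
    | h l =>
      obtain ⟨l', hperm, hsub⟩ := Multiset.coe_le.1 hT
      obtain ⟨f, hf⟩ := List.sublist_iff_exists_fin_orderEmbedding_get_eq.1 hsub
      have get_comp : C.get ∘ f = l'.get := funext fun i => (hf i).symm
      refine ⟨Finset.univ.map f.toEmbedding, ?_⟩
      rw [coe_pickList, Finset.map_val, Multiset.map_map, RelEmbedding.coe_toEmbedding, get_comp,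
        Fin.univ_val_map, List.ofFn_get]
      exact Multiset.coe_eq_coe.2 hperm
  · rintro ⟨S, rfl⟩
    calc (pickList C S : Multiset E) = S.val.map C.get := coe_pickList C S
      _ ≤ Finset.univ.val.map C.get :=
        Multiset.map_le_map (Finset.val_le_iff.2 (Finset.subset_univ S))
      _ = C := by rw [Fin.univ_val_map, List.ofFn_get]

theorem mem_subsums_coe_iff {C : List E} {a : E} :
    a ∈ A.subsums (C : Multiset E) ↔
      ∃ S : Finset (Fin C.length), A.sumList (pickList C S) = some a := by
  simp only [sumList_eq_sumMultiset]
  constructor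
  · rintro ⟨T, hTC, hT⟩
    obtain ⟨S, rfl⟩ := le_coe_iff_exists_pickList.1 hTC
    exact ⟨S, hT⟩
  · rintro ⟨S, hS⟩
    exact ⟨_, le_coe_iff_exists_pickList.2 ⟨S, rfl⟩, hS⟩

theorem compatWithCoversIn_iff :
    A.CompatWithCoversIn M X ↔
      ∀ F : Finset E, ↑F ⊆ M → ∃ C, A.IsOrthogonalIn X C ∧ ↑F ⊆ A.subsums C := by
  refine forall₂_congr fun F _ => ⟨?_, ?_⟩
  · rintro ⟨C, hCX, hC, hF⟩
    rw [sumList_eq_sumMultiset] at hC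
    exact ⟨C, ⟨hCX, Option.isSome_iff_exists.1 hC⟩, fun a ha => mem_subsums_coe_iff.2 (hF a ha)⟩
  · rintro ⟨C, hC, hF⟩
    induction C using Quotient.inductionOn with
    | h l =>
      refine ⟨l, hC.mem, ?_, fun a ha => mem_subsums_coe_iff.1 (hF ha)⟩
      rw [sumList_eq_sumMultiset]
      exact Option.isSome_iff_exists.2 hC.exists_sum

namespace CompatWithCoversIn

theorem mono_left (h : A.CompatWithCoversIn M X) (hNM : N ⊆ M) : A.CompatWithCoversIn N X :=
  fun F hF => h F (hF.trans hNM)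

theorem mono_right (h : A.CompatWithCoversIn M X) (hXN : X ⊆ N) : A.CompatWithCoversIn M N := by
  rw [compatWithCoversIn_iff] at h ⊢
  intro F hF
  obtain ⟨C, hC, hFC⟩ := h F hF
  exact ⟨C, hC.mono hXN, hFC⟩

theorem iUnion {ι : Type*} [Nonempty ι] {M : ι → Set E} (hM : Directed (· ⊆ ·) M)
    (h : ∀ i, A.CompatWithCoversIn (M i) X) : A.CompatWithCoversIn (⋃ i, M i) X := by
  intro F hF
  obtain ⟨i, hi⟩ := hM.exists_mem_subset_of_finset_subset_biUnion hF
  exact h i F hi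

theorem union (hM : A.CompatWithCoversIn M X)
    (hN : ∀ z ∈ N, ∃ G : Finset E, ↑G ⊆ M ∧ ∀ C, A.IsOrthogonalIn X C → ↑G ⊆ A.subsums C →
      ∃ D, A.RefinesIn X D C ∧ z ∈ A.subsums D) :
    A.CompatWithCoversIn (M ∪ N) X := by
  classical
  rw [compatWithCoversIn_iff] at hM ⊢
  suffices exists_cover : ∀ F : Finset E, ↑F ⊆ M ∪ N → ∀ G : Finset E, ↑G ⊆ M →
      ∃ C, A.IsOrthogonalIn X C ∧ ↑F ⊆ A.subsums C ∧ ↑G ⊆ A.subsums C by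
    intro F hF
    obtain ⟨C, hC, hFC, -⟩ := exists_cover F hF ∅ (by simp)
    exact ⟨C, hC, hFC⟩
  intro F hF
  induction F using Finset.induction_on with
  | empty =>
    intro G hG
    obtain ⟨C, hC, hGC⟩ := hM G hG
    exact ⟨C, hC, by simp, hGC⟩
  | insert z F _ ih =>
    intro G hG
    rw [Finset.coe_insert, Set.insert_subset_iff] at hF
    simp only [Finset.coe_insert, Set.insert_subset_iff]
    rcases hF.1 with hz | hz
    · obtain ⟨C, hC, hFC, hzGC⟩ := ih hF.2 (insert z G) (by simp [Set.insert_subset_iff, hz, hG])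
      rw [Finset.coe_insert, Set.insert_subset_iff] at hzGC
      exact ⟨C, hC, ⟨hzGC.1, hFC⟩, hzGC.2⟩
    · obtain ⟨Gz, hGz, exists_refinement⟩ := hN z hz
      obtain ⟨C, hC, hFC, hGC⟩ := ih hF.2 (G ∪ Gz) (by simp [hG, hGz])
      rw [Finset.coe_union, Set.union_subset_iff] at hGC
      obtain ⟨D, hDC, hzD⟩ := exists_refinement C hC hGC.2
      have hCD := hDC.subsums_subset
      exact ⟨D, hDC.isOrthogonalIn hC, ⟨hzD, hFC.trans hCD⟩, hGC.1.trans hCD⟩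

end CompatWithCoversIn

/-! ### Splitting an element along an orthogonal family -/

/-- `Q u s` abstracts both `u ≤ s` inside a set with the Riesz decomposition property and
`u ≤ s ≤ u'` in a homogeneous effect algebra. -/
theorem exists_refinesIn_mem_subsums_of_split {Q : E → E → Prop}
    (eq_zero : ∀ {u}, Q u A.zero → u = A.zero)
    (split : ∀ {u v s t : E}, v ∈ X → (v : A.Totalization) + s = t → Q u t →
      ∃ u₁ ∈ X, ∃ z ∈ X, ∃ u₂ : E, (u₁ : A.Totalization) + z = v ∧
        (u₁ : A.Totalization) + u₂ = u ∧ Q u₂ s)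
    (hC : ∀ c ∈ C, c ∈ X) {u s : E} (hs : A.sumMultiset C = s) (hQ : Q u s) :
    ∃ D, A.RefinesIn X D C ∧ u ∈ A.subsums D := by
  induction C using Multiset.induction_on generalizing u s with
  | empty =>
    obtain rfl : A.zero = s := coe_injective (by rw [coe_zero, ← hs, sumMultiset_zero])
    obtain rfl := eq_zero hQ
    exact ⟨0, .zero, 0, le_rfl, sumMultiset_zero⟩
  | cons v C ih =>
    rw [Multiset.forall_mem_cons] at hC
    rw [sumMultiset_cons] at hs
    obtain ⟨-, t, -, ht⟩ := exists_coe_of_add_eq_coe hs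
    rw [ht] at hs
    obtain ⟨u₁, hu₁, z, hz, u₂, hu₁z, hu₁u₂, hQ₂⟩ := split hC.1 hs hQ
    obtain ⟨D, hDC, T, hTD, hT⟩ := ih hC.2 ht hQ₂
    refine ⟨{u₁, z} + D, .cons (by simp [hu₁, hz]) (by simp [sumMultiset, hu₁z]) hDC,
      {u₁} + T, ?_, ?_⟩
    · exact add_le_add (Multiset.singleton_le.2 (by simp)) hTD
    · rw [Multiset.singleton_add, sumMultiset_cons, hT, hu₁u₂]

theorem RDPOn.exists_refinesIn_mem_subsums (hR : A.RDPOn B) (hB : A.IsSubEA B)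
    (hC : ∀ c ∈ C, c ∈ B) {u s : E} (hu : u ∈ B) (hs : A.sumMultiset C = s) (hus : A.le u s) :
    ∃ D, A.RefinesIn B D C ∧ u ∈ A.subsums D := by
  refine exists_refinesIn_mem_subsums_of_split (Q := fun u s => u ∈ B ∧ s ∈ B ∧ A.le u s)
    (fun h => eq_zero_of_le_zero h.2.2) ?_ hC hs ⟨hu, hB.sumMultiset_mem hC hs, hus⟩
  rintro u v s t hv hvs ⟨hu, ht, hut⟩
  have hsB : s ∈ B := hB.mem_of_add_eq hv ht hvs
  obtain ⟨u₁, u₂, hu₁, hu₂, hu₁v, hu₂s, hu₁u₂⟩ := hR u v s t hu hv hsB hvs hut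
  exact ⟨u₁, hu₁, A.ominus v u₁, hB.2 v hv u₁ hu₁ hu₁v, u₂, coe_add_ominus hu₁v, hu₁u₂,
    hu₂, hsB, hu₂s⟩

theorem Homogeneous.exists_refinesIn_mem_subsums_of_le_compl (hH : A.Homogeneous)
    (hX : A.closureStep X ⊆ X) (hC : ∀ c ∈ C, c ∈ X) {u s : E} (hs : A.sumMultiset C = s)
    (hus : A.le u s) (hus' : A.le u (A.compl s)) :
    ∃ D, A.RefinesIn X D C ∧ u ∈ A.subsums D := by
  refine exists_refinesIn_mem_subsums_of_split (Q := fun u s => A.le u s ∧ A.le u (A.compl s))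
    (fun h => eq_zero_of_le_zero h.1) ?_ hC hs ⟨hus, hus'⟩
  rintro u v s t hv hvs ⟨hut, hut'⟩
  obtain ⟨u₁, u₂, hu₁v, hu₂s, hu₁u₂⟩ := hH u v s t hvs hut hut'
  rw [← coe_add_coe_eq_coe] at hu₁u₂
  obtain ⟨w, hw⟩ := le_compl_iff.1 hut'
  rw [← hu₁u₂, ← hvs, add_add_add_comm] at hw
  obtain ⟨w₁, w₂, hw₁, hw₂⟩ := exists_coe_of_add_eq_coe hw
  have hu₁v' : A.le u₁ (A.compl v) := le_compl_iff.2 ⟨w₁, hw₁⟩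
  obtain ⟨z, hz⟩ := hu₁v
  exact ⟨u₁, hX (.inl ⟨v, hv, ⟨z, hz⟩, hu₁v'⟩), z, hX (.inr ⟨v, hv, u₁, ⟨z, hz⟩, hu₁v', hz⟩),
    u₂, hz, hu₁u₂, hu₂s, le_compl_iff.2 ⟨w₂, hw₂⟩⟩

/-- Cancelling the common part of `T` and of a subfamily `U` with sum `u` leaves two disjoint
subfamilies, whose sums are orthogonal, so that homogeneity applies. -/
theorem Homogeneous.exists_refinesIn_mem_subsums (hH : A.Homogeneous)
    (hX : A.closureStep X ⊆ X) (hC : A.IsOrthogonalIn X C) {T : Multiset E} (hTC : T ≤ C)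
    {u x : E} (hT : A.sumMultiset T = x) (hu : u ∈ A.subsums C) (hux : A.le u x) :
    ∃ D, A.RefinesIn X D T ∧ u ∈ A.subsums D := by
  classical
  obtain ⟨U, hUC, hU⟩ := hu
  have hT_add : T - U + T ∩ U = T := Multiset.sub_add_inter T U
  have hU_add : U - T + T ∩ U = U := by rw [Multiset.inter_comm, Multiset.sub_add_inter]
  have h_diff_le : (U - T) + (T - U) ≤ C :=
    calc (U - T) + (T - U) ≤ (U - T) + T := by gcongr; exact Multiset.sub_le_self T U
      _ ≤ C := Multiset.union_le hUC hTC
  obtain ⟨t, ht⟩ := (hC.of_le h_diff_le).exists_sum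
  rw [sumMultiset_add] at ht
  obtain ⟨q, r, hq, hr⟩ := exists_coe_of_add_eq_coe ht
  have hqr : A.le q r := by
    obtain ⟨c, hc⟩ := hux
    refine le_of_add_eq_coe (x := c) (add_left_cancel_of_eq_coe (x := A.sumMultiset (T ∩ U))
      (d := x) ?_ ?_)
    · rw [← hq, ← add_assoc, ← sumMultiset_add, add_comm (T ∩ U), hU_add, hU,
        coe_add_coe_eq_coe.2 hc]
    · rw [← hr, ← sumMultiset_add, add_comm, hT_add, hT]
  have hTUX := (hC.of_le hTC).of_le (Multiset.sub_le_self T U)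
  obtain ⟨D, hD, V, hVD, hV⟩ := hH.exists_refinesIn_mem_subsums_of_le_compl hX hTUX.mem hr hqr
    (le_compl_iff.2 ⟨t, by rw [← hq, ← hr, ht]⟩)
  have hTU : ∀ c ∈ T ∩ U, c ∈ X := ((hC.of_le hTC).of_le Multiset.inter_le_left).mem
  have hD_refines := hD.add (.refl hTU)
  rw [hT_add] at hD_refines
  refine ⟨D + T ∩ U, hD_refines, V + T ∩ U, by gcongr, ?_⟩
  rw [sumMultiset_add, hV, ← hq, ← sumMultiset_add, hU_add, hU]

/-! ### The closure of a set -/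

theorem subset_closureStep (M : Set E) : M ⊆ A.closureStep M := fun y hy =>
  .inr ⟨y, hy, A.zero, zero_le y, zero_le (A.compl y), by rw [A.comm, oplus_zero]⟩

theorem closureSeq_succ (M : Set E) (n : ℕ) :
    A.closureSeq M (n + 1) = A.closureStep (A.closureSeq M n) :=
  Function.iterate_succ_apply' _ _ _

theorem monotone_closureSeq (M : Set E) : Monotone (A.closureSeq M) :=
  monotone_nat_of_le_succ fun n => closureSeq_succ (A := A) M n ▸ subset_closureStep _

theorem subset_closure (M : Set E) : M ⊆ A.closure M :=
  Set.subset_iUnion (A.closureSeq M) 0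

theorem closureStep_closure_subset (M : Set E) : A.closureStep (A.closure M) ⊆ A.closure M := by
  rintro x (⟨y, hy, hx⟩ | ⟨y, hy, hx⟩)
  all_goals
    obtain ⟨n, hn⟩ := Set.mem_iUnion.1 hy
    refine Set.mem_iUnion.2 ⟨n + 1, ?_⟩
    rw [closureSeq_succ]
  · exact .inl ⟨y, hn, hx⟩
  · exact .inr ⟨y, hn, hx⟩

theorem Homogeneous.compatWithCoversIn_closureStep (hH : A.Homogeneous)
    (hX : A.closureStep X ⊆ X) (hM : A.CompatWithCoversIn M X) :
    A.CompatWithCoversIn (A.closureStep M) X := by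
  have exists_refinement {x y z : E} (hxz : (x : A.Totalization) + z = y)
      (hxy' : A.le x (A.compl y)) (C : Multiset E) (hC : A.IsOrthogonalIn X C)
      (hy : y ∈ A.subsums C) : ∃ D, A.RefinesIn X D C ∧ x ∈ A.subsums D ∧ z ∈ A.subsums D := by
    obtain ⟨T, hTC, hT⟩ := hy
    obtain ⟨T', hT'T, hx⟩ := hH.exists_refinesIn_mem_subsums_of_le_compl hX
      (hC.of_le hTC).mem hT ⟨z, hxz⟩ hxy'
    exact hT'T.exists_mem_subsums_of_le hC hTC hT hx hxz
  refine (hM.union (N := A.closureStep M) ?_).mono_left Set.subset_union_right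
  rintro w (⟨y, hy, ⟨z, hwz⟩, hwy'⟩ | ⟨y, hy, x, -, hxy', hxw⟩)
  all_goals refine ⟨{y}, by simpa using hy, fun C hC hyC => ?_⟩
  · obtain ⟨D, hDC, hw, -⟩ := exists_refinement hwz hwy' C hC (by simpa using hyC)
    exact ⟨D, hDC, hw⟩
  · obtain ⟨D, hDC, -, hw⟩ := exists_refinement hxw hxy' C hC (by simpa using hyC)
    exact ⟨D, hDC, hw⟩

theorem Homogeneous.internallyCompatible_closure (hH : A.Homogeneous)
    (hM : A.InternallyCompatible M) : A.InternallyCompatible (A.closure M) := by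
  refine CompatWithCoversIn.iUnion (monotone_closureSeq M).directed_le fun n => ?_
  induction n with
  | zero => exact hM.mono_right (subset_closure M)
  | succ n ih =>
    rw [closureSeq_succ]
    exact hH.compatWithCoversIn_closureStep (closureStep_closure_subset M) ih

/-! ### Maximal internally compatible sets -/

theorem RDPOn.internallyCompatible (hR : A.RDPOn B) (hB : A.IsSubEA B) :
    A.InternallyCompatible B := by
  have compat_one : A.CompatWithCoversIn {A.one} B := by
    rw [compatWithCoversIn_iff]
    have h_sum : A.sumMultiset {A.one} = A.one := by simp [sumMultiset]
    refine fun F hF => ⟨{A.one}, ⟨by simpa using hB.1, A.one, h_sum⟩, hF.trans ?_⟩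
    exact Set.singleton_subset_iff.2 ⟨{A.one}, le_rfl, h_sum⟩
  refine (compat_one.union (N := B) fun z hz => ⟨{A.one}, by simp, fun C hC h_one => ?_⟩).mono_left
    Set.subset_union_right
  obtain ⟨T, hTC, hT⟩ : A.one ∈ A.subsums C := by simpa using h_one
  obtain ⟨T', hT'T, hzT'⟩ := hR.exists_refinesIn_mem_subsums hB (hC.of_le hTC).mem hz hT (le_one z)
  obtain ⟨D, hDC, hzD, -⟩ :=
    hT'T.exists_mem_subsums_of_le hC hTC hT hzT' (coe_add_compl z)
  exact ⟨D, hDC, hzD⟩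

theorem exists_maximal_internallyCompatible (hM : A.InternallyCompatible M) :
    ∃ B, M ⊆ B ∧ Maximal A.InternallyCompatible B := by
  refine zorn_subset_nonempty {N | A.InternallyCompatible N} (fun c hc hchain hne => ?_) M hM
  refine ⟨⋃₀ c, ?_, fun N hN => Set.subset_sUnion_of_mem hN⟩
  have := hne.to_subtype
  rw [Set.mem_ofPred_eq, Set.sUnion_eq_iUnion]
  refine CompatWithCoversIn.iUnion hchain.directedOn.directed_val fun N => ?_
  exact CompatWithCoversIn.mono_right (hc N.2) (Set.subset_iUnion (fun N : c => (N : Set E)) N)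

theorem Homogeneous.closureStep_subset_of_maximal (hH : A.Homogeneous)
    (hB : Maximal A.InternallyCompatible B) : A.closureStep B ⊆ B := by
  rw [hB.eq_of_subset (hH.internallyCompatible_closure hB.prop) (subset_closure B)]
  exact closureStep_closure_subset B

theorem Homogeneous.internallyCompatible_insert_ominus (hH : A.Homogeneous)
    (hB_closed : A.closureStep B ⊆ B) (hB : A.InternallyCompatible B) {a b : E} (ha : a ∈ B)
    (hb : b ∈ B) (hba : A.le b a) : A.InternallyCompatible (insert (A.ominus a b) B) := by
  classical
  have h_union : A.CompatWithCoversIn (B ∪ {A.ominus a b}) B := by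
    refine hB.union ?_
    rintro z rfl
    refine ⟨{a, b}, by simp [Set.insert_subset_iff, ha, hb], fun C hC hab => ?_⟩
    rw [Finset.coe_pair, Set.pair_subset_iff] at hab
    obtain ⟨T, hTC, hT⟩ := hab.1
    obtain ⟨T', hT'T, hbT'⟩ := hH.exists_refinesIn_mem_subsums hB_closed hC hTC hT hab.2 hba
    obtain ⟨D, hDC, -, hD⟩ := hT'T.exists_mem_subsums_of_le hC hTC hT hbT' (coe_add_ominus hba)
    exact ⟨D, hDC, hD⟩
  rw [Set.union_singleton] at h_union
  exact h_union.mono_right (Set.subset_insert _ _)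

theorem Homogeneous.isSubEA_of_maximal (hH : A.Homogeneous)
    (hB : Maximal A.InternallyCompatible B) (h_one : A.one ∈ B) : A.IsSubEA B := by
  refine ⟨h_one, fun a ha b hb hba => ?_⟩
  exact hB.mem_of_prop_insert (hH.internallyCompatible_insert_ominus
    (hH.closureStep_subset_of_maximal hB) hB.prop ha hb hba)

theorem Homogeneous.exists_isOrthogonalIn_add_le (hH : A.Homogeneous)
    (hB_closed : A.closureStep B ⊆ B) (hB : A.InternallyCompatible B) {u v₁ v₂ s : E} (hu : u ∈ B)
    (hv₁ : v₁ ∈ B) (hs : s ∈ B) (hv : (v₁ : A.Totalization) + v₂ = s) :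
    ∃ C V₁ V₂, A.IsOrthogonalIn B C ∧ u ∈ A.subsums C ∧ V₁ + V₂ ≤ C ∧
      A.sumMultiset V₁ = v₁ ∧ A.sumMultiset V₂ = v₂ := by
  classical
  obtain ⟨C, hC, hFC⟩ := compatWithCoversIn_iff.1 hB {s, v₁, u}
    (by simp [Set.insert_subset_iff, hs, hv₁, hu])
  simp only [Finset.coe_insert, Finset.coe_singleton, Set.insert_subset_iff,
    Set.singleton_subset_iff] at hFC
  obtain ⟨⟨T, hTC, hT⟩, hv₁C, huC⟩ := hFC
  obtain ⟨T', hT'T, V₁, hV₁T', hV₁⟩ :=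
    hH.exists_refinesIn_mem_subsums hB_closed hC hTC hT hv₁C ⟨v₂, hv⟩
  obtain ⟨D, hDC, hT'D⟩ := hT'T.exists_of_le hC hTC
  obtain ⟨V₂, rfl⟩ := Multiset.le_iff_exists_add.1 hV₁T'
  have hV : (v₁ : A.Totalization) + A.sumMultiset V₂ = s := by
    rw [← hV₁, ← sumMultiset_add, hT'T.sumMultiset_eq, hT]
  exact ⟨D, V₁, V₂, hDC.isOrthogonalIn hC, hDC.subsums_subset huC, hT'D, hV₁,
    add_left_cancel_of_eq_coe hV hv⟩

theorem Homogeneous.rdpOn_of_internallyCompatible (hH : A.Homogeneous)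
    (hB_closed : A.closureStep B ⊆ B) (hB : A.InternallyCompatible B) (hB_sub : A.IsSubEA B) :
    A.RDPOn B := by
  intro u v₁ v₂ s hu hv₁ hv₂ hv hus
  rw [← coe_add_coe_eq_coe] at hv
  obtain ⟨C, V₁, V₂, hC, huC, hVC, hV₁, hV₂⟩ :=
    hH.exists_isOrthogonalIn_add_le hB_closed hB hu hv₁ (hB_sub.add_mem hv₁ hv₂ hv) hv
  have hV : A.sumMultiset (V₁ + V₂) = s := by rw [sumMultiset_add, hV₁, hV₂, hv]
  obtain ⟨Y, hY, huY⟩ := hH.exists_refinesIn_mem_subsums hB_closed hC hVC hV huC hus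
  obtain ⟨Y₁, Y₂, hY₁, hY₂, rfl⟩ := hY.exists_add
  obtain ⟨u₁, hu₁, u₂, hu₂, hu₁u₂⟩ := exists_add_eq_of_mem_subsums_add huY
  exact ⟨u₁, u₂, hB_sub.subsums_subset hY₁.mem hu₁, hB_sub.subsums_subset hY₂.mem hu₂,
    le_of_mem_subsums hu₁ (hY₁.sumMultiset_eq.trans hV₁),
    le_of_mem_subsums hu₂ (hY₂.sumMultiset_eq.trans hV₂), hu₁u₂⟩

theorem Homogeneous.rdpOn_of_maximal (hH : A.Homogeneous)
    (hB : Maximal A.InternallyCompatible B) (h_one : A.one ∈ B) : A.RDPOn B :=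
  hH.rdpOn_of_internallyCompatible (hH.closureStep_subset_of_maximal hB) hB.prop
    (hH.isSubEA_of_maximal hB h_one)

end EffectAlgebra

/-- `B` is a maximal internally compatible subset containing `1`
iff `B` is a block. -/
theorem maximal_internally_compatible_iff_block {E : Type*}
    (A : EffectAlgebra E) (hH : A.Homogeneous) (B : Set E) :
    (A.InternallyCompatible B ∧ A.one ∈ B ∧
      ∀ N : Set E, A.InternallyCompatible N → B ⊆ N → B = N) ↔
    A.IsBlock B := by
  rw [← and_left_comm, ← maximal_subset_iff, and_comm]
  constructor
  · rintro ⟨hB, h_one⟩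
    exact ⟨hH.isSubEA_of_maximal hB h_one, hH.rdpOn_of_maximal hB h_one,
      fun B' hB' hR hBB' => (hB.eq_of_subset (hR.internallyCompatible hB') hBB').symm⟩
  · rintro ⟨hB, hR, h_block⟩
    refine ⟨maximal_subset_iff.2 ⟨hR.internallyCompatible hB, fun N hN hBN => ?_⟩, hB.1⟩
    obtain ⟨B', hNB', hB'⟩ := EffectAlgebra.exists_maximal_internallyCompatible hN
    have h_one : A.one ∈ B' := hNB' (hBN hB.1)
    have hB'B : B' = B := h_block B' (hH.isSubEA_of_maximal hB' h_one)
      (hH.rdpOn_of_maximal hB' h_one) (hBN.trans hNB')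
    exact hBN.antisymm (hNB'.trans hB'B.subset)
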